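/- Let θ : ℝⁿ → [−∞,+∞] be symmetric and let the spectral function g = θ∘λ be lower semicontinuous. Let X ∈ Sⁿ, Y ∈ ∂g(X), and let U ∈ Oⁿ(X) and y ∈ ∂θ(λ(X)) be such that Y = U·Diag(y)·Uᵀ. Let v = Qy for a block-diagonal permutation matrix Q (blocks indexed by α₁,…,α_r) chosen so that each block v_{α_m} has nonincreasing entries. Then for every H ∈ Sⁿ, d²g(X,Y)(H) ≥ d²θ(λ(X),v)(λ'(X;H)) + 2·∑_{m=1}^{r} ⟨Diag(y_{α_m}), U_{α_m}ᵀ·H·(μ_m·I − X)^†·H·U_{α_m}⟩. -/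

import Mathlib

open Filter Topology Matrix

noncomputable section

namespace SpecPaper

/-! ## Generic variational analysis definitions over a topological real vector space -/

variable {E : Type*}

section Generic

variable [AddCommGroup E] [Module ℝ E] [TopologicalSpace E]

/-- `f x` is finite (neither `+∞` nor `-∞`). -/
def IsFiniteAt (f : E → EReal) (x : E) : Prop :=
  f x ≠ ⊤ ∧ f x ≠ ⊥

/-- The norm induced by a given inner product. -/
noncomputable def nrm (ip : E → E → ℝ) (x : E) : ℝ :=
  Real.sqrt (ip x x)

/-- The subderivative `df(x)(w)`. -/
noncomputable def subderiv (f : E → EReal) (x w : E) : EReal :=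
  Filter.liminf (fun p : ℝ × E => (((p.1)⁻¹ : ℝ) : EReal) * (f (x + p.1 • p.2) - f x))
    ((nhdsWithin (0 : ℝ) (Set.Ioi 0)) ×ˢ nhds w)

/-- The second-order difference quotient `Δ²ₜ f(x,v)(w)`. -/
noncomputable def sdq2 (ip : E → E → ℝ) (f : E → EReal) (x v : E) (t : ℝ) (w : E) : EReal :=
  (((2 / t ^ 2) : ℝ) : EReal) * (f (x + t • w) - f x - ((t * ip v w : ℝ) : EReal))

/-- The second subderivative `d²f(x,v)(w)`. -/
noncomputable def subderiv2 (ip : E → E → ℝ) (f : E → EReal) (x v w : E) : EReal :=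
  Filter.liminf (fun p : ℝ × E => sdq2 ip f x v p.1 p.2)
    ((nhdsWithin (0 : ℝ) (Set.Ioi 0)) ×ˢ nhds w)

/-- Twice epi-differentiability of `f` at `x` for `v`. -/
def TwiceEpiDiff (ip : E → E → ℝ) (f : E → EReal) (x v : E) : Prop :=
  IsFiniteAt f x ∧
    ∀ t : ℕ → ℝ, (∀ k, 0 < t k) → Tendsto t atTop (nhds 0) →
      ∀ w : E, ∃ ws : ℕ → E, Tendsto ws atTop (nhds w) ∧
        Tendsto (fun k => sdq2 ip f x v (t k) (ws k)) atTop (nhds (subderiv2 ip f x v w))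

/-- `v` is a regular subgradient of `f` at `x`. -/
def RegSubgrad (ip : E → E → ℝ) (f : E → EReal) (x v : E) : Prop :=
  IsFiniteAt f x ∧
    (0 : EReal) ≤ Filter.liminf
      (fun y : E =>
        (((nrm ip (y - x))⁻¹ : ℝ) : EReal) * (f y - f x - ((ip v (y - x) : ℝ) : EReal)))
      (nhdsWithin x {x}ᶜ)

/-- `v` is a (limiting) subgradient of `f` at `x`. -/
def LimSubgrad (ip : E → E → ℝ) (f : E → EReal) (x v : E) : Prop :=
  ∃ xs vs : ℕ → E, (∀ k, RegSubgrad ip f (xs k) (vs k)) ∧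
    Tendsto xs atTop (nhds x) ∧ Tendsto vs atTop (nhds v) ∧
    Tendsto (fun k => f (xs k)) atTop (nhds (f x))

/-- The tangent cone to `C` at `x`. -/
def tangentCone (C : Set E) (x : E) : Set E :=
  {w | ∃ (t : ℕ → ℝ) (ws : ℕ → E), (∀ k, 0 < t k) ∧ Tendsto t atTop (nhds 0) ∧
    Tendsto ws atTop (nhds w) ∧ ∀ k, x + t k • ws k ∈ C}

/-- The regular normal cone to `C` at `x`. -/
def regNormalCone (ip : E → E → ℝ) (C : Set E) (x : E) : Set E :=
  {v | ∀ w ∈ tangentCone C x, ip v w ≤ 0}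

/-- The limiting normal cone to `C` at `x`. -/
def limNormalCone (ip : E → E → ℝ) (C : Set E) (x : E) : Set E :=
  {v | ∃ xs vs : ℕ → E, (∀ k, xs k ∈ C) ∧ (∀ k, vs k ∈ regNormalCone ip C (xs k)) ∧
    Tendsto xs atTop (nhds x) ∧ Tendsto vs atTop (nhds v)}

/-- The critical cone `C_f(x,v)`. -/
def criticalCone (ip : E → E → ℝ) (f : E → EReal) (x v : E) : Set E :=
  {w | subderiv f x w = ((ip v w : ℝ) : EReal)}

/-- `f` is locally Lipschitz continuous at `x` relative to its domain. -/
def LocLipAtRelDom (ip : E → E → ℝ) (f : E → EReal) (x : E) : Prop :=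
  IsFiniteAt f x ∧
    ∃ V ∈ nhds x, ∃ ℓ : ℝ, 0 ≤ ℓ ∧
      ∀ a ∈ V, ∀ b ∈ V, f a ≠ ⊤ → f b ≠ ⊤ →
        f a ≠ ⊥ ∧ f b ≠ ⊥ ∧ |(f a).toReal - (f b).toReal| ≤ ℓ * nrm ip (a - b)

/-- `f` is locally Lipschitz continuous relative to its domain. -/
def LocLipRelDom (ip : E → E → ℝ) (f : E → EReal) : Prop :=
  ∀ x : E, f x ≠ ⊤ → LocLipAtRelDom ip f x

/-- `v` is a proximal subgradient of `f` at `x`. -/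
def ProxSubgrad (ip : E → E → ℝ) (f : E → EReal) (x v : E) : Prop :=
  IsFiniteAt f x ∧
    ∃ r > (0 : ℝ), ∃ ε > (0 : ℝ), ∀ x' : E, nrm ip (x' - x) ≤ ε →
      f x + ((ip v (x' - x) - r / 2 * ip (x' - x) (x' - x) : ℝ) : EReal) ≤ f x'

/-- `f` is prox-regular at `x` for `v`. -/
def ProxRegularAtFor (ip : E → E → ℝ) (f : E → EReal) (x v : E) : Prop :=
  IsFiniteAt f x ∧
    (∃ δ > (0 : ℝ), LowerSemicontinuousOn f {x' | nrm ip (x' - x) < δ}) ∧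
    ∃ ε > (0 : ℝ), ∃ r : ℝ, 0 ≤ r ∧
      ∀ x₁ v₁ : E, LimSubgrad ip f x₁ v₁ → nrm ip (x₁ - x) < ε → nrm ip (v₁ - v) < ε →
        f x₁ < f x + (ε : EReal) →
        ∀ x' : E, nrm ip (x' - x) < ε →
          f x₁ + ((ip v₁ (x' - x₁) - r / 2 * ip (x' - x₁) (x' - x₁) : ℝ) : EReal) ≤ f x'

/-- `f` is prox-regular at `x` (for every subgradient). -/
def ProxRegularAt (ip : E → E → ℝ) (f : E → EReal) (x : E) : Prop :=
  ∀ v : E, LimSubgrad ip f x v → ProxRegularAtFor ip f x v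

/-- `f` is subdifferentially continuous at `x`. -/
def SubdiffContAt (ip : E → E → ℝ) (f : E → EReal) (x : E) : Prop :=
  ∀ v : E, LimSubgrad ip f x v →
    ∀ xs vs : ℕ → E, (∀ k, LimSubgrad ip f (xs k) (vs k)) →
      Tendsto xs atTop (nhds x) → Tendsto vs atTop (nhds v) →
      Tendsto (fun k => f (xs k)) atTop (nhds (f x))

/-- `f` is prox-bounded. -/
def ProxBounded (ip : E → E → ℝ) (f : E → EReal) : Prop :=
  ∃ α c : ℝ, ∀ x : E, (c : EReal) ≤ f x + ((α * ip x x : ℝ) : EReal)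

/-- The proximal mapping (as a set of minimizers). -/
def proxSet (ip : E → E → ℝ) (f : E → EReal) (γ : ℝ) (x : E) : Set E :=
  {w | ∀ w' : E,
    f w + ((1 / (2 * γ) * ip (w - x) (w - x) : ℝ) : EReal) ≤
      f w' + ((1 / (2 * γ) * ip (w' - x) (w' - x) : ℝ) : EReal)}

/-- The proximal map of `f` with parameter `γ` is single-valued around `z` and the resulting
map is directionally differentiable at `z`. -/
def ProxSingleDirDiff (ip : E → E → ℝ) (f : E → EReal) (γ : ℝ) (z : E) : Prop :=
  ∃ V ∈ nhds z, ∃ P : E → E, (∀ u ∈ V, proxSet ip f γ u = {P u}) ∧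
    ∀ h : E, ∃ L : E,
      Tendsto (fun t : ℝ => t⁻¹ • (P (z + t • h) - P z)) (nhdsWithin 0 (Set.Ioi 0)) (nhds L)

/-- The parabolic difference quotient. -/
noncomputable def parabQuot (f : E → EReal) (x w : E) (t : ℝ) (z : E) : EReal :=
  (((2 / t ^ 2) : ℝ) : EReal) *
    (f (x + t • w + (t ^ 2 / 2) • z) - f x - ((t * (subderiv f x w).toReal : ℝ) : EReal))

/-- The parabolic subderivative `d²f(x)(w | z)`. -/
noncomputable def parabSubderiv (f : E → EReal) (x w z : E) : EReal :=
  Filter.liminf (fun p : ℝ × E => parabQuot f x w p.1 p.2)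
    ((nhdsWithin (0 : ℝ) (Set.Ioi 0)) ×ˢ nhds z)

/-- `f` is parabolically epi-differentiable at `x` for `w`. -/
def ParabEpiDiff (f : E → EReal) (x w : E) : Prop :=
  (∃ z : E, parabSubderiv f x w z < ⊤) ∧
    ∀ t : ℕ → ℝ, (∀ k, 0 < t k) → Tendsto t atTop (nhds 0) →
      ∀ z : E, ∃ zs : ℕ → E, Tendsto zs atTop (nhds z) ∧
        Tendsto (fun k => parabQuot f x w (t k) (zs k)) atTop (nhds (parabSubderiv f x w z))

/-- `φ` is a generalized quadratic form: its domain is a linear subspace and on the domain it is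
given by a symmetric linear operator. -/
def IsGQF (ip : E → E → ℝ) (φ : E → EReal) : Prop :=
  (φ 0 ≠ ⊤) ∧
  (∀ x y : E, φ x ≠ ⊤ → φ y ≠ ⊤ → φ (x + y) ≠ ⊤) ∧
  (∀ (c : ℝ) (x : E), φ x ≠ ⊤ → φ (c • x) ≠ ⊤) ∧
  ∃ L : E → E,
    (∀ x y : E, φ x ≠ ⊤ → φ y ≠ ⊤ → L (x + y) = L x + L y) ∧
    (∀ (c : ℝ) (x : E), φ x ≠ ⊤ → L (c • x) = c • L x) ∧
    (∀ x y : E, φ x ≠ ⊤ → φ y ≠ ⊤ → ip (L x) y = ip x (L y)) ∧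
    (∀ x : E, φ x ≠ ⊤ → φ x = ((ip (L x) x : ℝ) : EReal))

/-- `f` is generalized twice differentiable at `x` for `v`. -/
def GenTwiceDiff (ip : E → E → ℝ) (f : E → EReal) (x v : E) : Prop :=
  TwiceEpiDiff ip f x v ∧ IsGQF ip (subderiv2 ip f x v)

/-- Proto-differentiability of a set-valued map `F` at `x` for `y ∈ F x`. -/
def ProtoDiff (F : E → Set E) (x y : E) : Prop :=
  ∀ w η : E, (w, η) ∈ tangentCone {p : E × E | p.2 ∈ F p.1} (x, y) →
    ∀ t : ℕ → ℝ, (∀ k, 0 < t k) → Tendsto t atTop (nhds 0) →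
      ∃ ws ηs : ℕ → E, Tendsto ws atTop (nhds w) ∧ Tendsto ηs atTop (nhds η) ∧
        ∀ k, y + t k • ηs k ∈ F (x + t k • ws k)

/-- Relative interior of a set (interior relative to its affine hull). -/
def relInterior (C : Set E) : Set E :=
  {y | y ∈ C ∧ ∃ V ∈ nhds y, ∀ z ∈ V, z ∈ affineSpan ℝ C → z ∈ C}

/-- A polyhedral set: the intersection of finitely many closed half-spaces. -/
def IsPolyhedral (ip : E → E → ℝ) (C : Set E) : Prop :=
  ∃ (k : ℕ) (a : Fin k → E) (b : Fin k → ℝ), C = {x | ∀ j : Fin k, ip (a j) x ≤ b j}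

/-- The subdifferential of a convex function. -/
def convexSubdiff (ip : E → E → ℝ) (f : E → EReal) (x : E) : Set E :=
  {v | ∀ z : E, f x + ((ip v (z - x) : ℝ) : EReal) ≤ f z}

/-- The natural inner product on `E × ℝ`. -/
def ipProd (ip : E → E → ℝ) : E × ℝ → E × ℝ → ℝ :=
  fun p q => ip p.1 q.1 + p.2 * q.2

/-- The epigraph of `f`. -/
def epiSet (f : E → EReal) : Set (E × ℝ) :=
  {p | f p.1 ≤ (p.2 : EReal)}

/-- `f` is subdifferentially regular at `x`. -/
def SubdiffRegularAt (ip : E → E → ℝ) (f : E → EReal) (x : E) : Prop :=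
  IsFiniteAt f x ∧
    regNormalCone (ipProd ip) (epiSet f) (x, (f x).toReal) =
      limNormalCone (ipProd ip) (epiSet f) (x, (f x).toReal)

/-! Real-valued versions: semidifferentiability, gradients. -/

/-- `f` is semidifferentiable at `x`. -/
def SemiDiffAt (f : E → ℝ) (x : E) : Prop :=
  ∀ w : E, ∃ d : ℝ,
    Tendsto (fun p : ℝ × E => (p.1)⁻¹ * (f (x + p.1 • p.2) - f x))
      ((nhdsWithin (0 : ℝ) (Set.Ioi 0)) ×ˢ nhds w) (nhds d)

/-- The (real value of the) subderivative of a real-valued function. -/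
noncomputable def dReal (f : E → ℝ) (x w : E) : ℝ :=
  (subderiv (fun y => ((f y : ℝ) : EReal)) x w).toReal

/-- The second-order difference quotient built from the subderivative. -/
noncomputable def sdq2R (f : E → ℝ) (x : E) (t : ℝ) (w : E) : ℝ :=
  (2 / t ^ 2) * (f (x + t • w) - f x - t * dReal f x w)

/-- `f` is twice semidifferentiable at `x`. -/
def TwiceSemiDiffAt (f : E → ℝ) (x : E) : Prop :=
  SemiDiffAt f x ∧
    ∀ w : E, ∃ d : ℝ,
      Tendsto (fun p : ℝ × E => sdq2R f x p.1 p.2)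
        ((nhdsWithin (0 : ℝ) (Set.Ioi 0)) ×ˢ nhds w) (nhds d)

/-- The second semiderivative `d²f(x)(w)` (the liminf; it is the full limit whenever `f` is
twice semidifferentiable at `x`). -/
noncomputable def secondSemiDeriv (f : E → ℝ) (x w : E) : EReal :=
  Filter.liminf (fun p : ℝ × E => ((sdq2R f x p.1 p.2 : ℝ) : EReal))
    ((nhdsWithin (0 : ℝ) (Set.Ioi 0)) ×ˢ nhds w)

/-- `f` is (Fréchet) differentiable at `x` with gradient `g` (w.r.t. inner product `ip`). -/
def HasGradAt (ip : E → E → ℝ) (f : E → ℝ) (x g : E) : Prop :=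
  Tendsto (fun y : E => (nrm ip (y - x))⁻¹ * (f y - f x - ip g (y - x)))
    (nhdsWithin x {x}ᶜ) (nhds 0)

/-- `f` is locally Lipschitz continuous around `x`. -/
def LocLipAt (ip : E → E → ℝ) (f : E → ℝ) (x : E) : Prop :=
  ∃ V ∈ nhds x, ∃ ℓ : ℝ, 0 ≤ ℓ ∧ ∀ a ∈ V, ∀ b ∈ V, |f a - f b| ≤ ℓ * nrm ip (a - b)

/-- `f` is twice differentiable at `x` with gradient map `G` near `x` and second derivative
(the derivative of `G` at `x`) given by the linear map `Dxx`. -/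
def HasSecondDerivAt (ip : E → E → ℝ) (f : E → EReal) (x : E) (G : E → E) (Dxx : E → E) :
    Prop :=
  ∃ V ∈ nhds x, ∃ fr : E → ℝ,
    (∀ z ∈ V, f z = ((fr z : ℝ) : EReal)) ∧
    (∀ z ∈ V, HasGradAt ip fr z (G z)) ∧
    IsLinearMap ℝ Dxx ∧
    Tendsto (fun z : E => (nrm ip (z - x))⁻¹ • (G z - G x - Dxx (z - x)))
      (nhdsWithin x {x}ᶜ) (nhds 0)

/-- `f` is twice differentiable at `x`. -/
def TwiceDiffAt (ip : E → E → ℝ) (f : E → EReal) (x : E) : Prop :=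
  ∃ G Dxx : E → E, HasSecondDerivAt ip f x G Dxx

end Generic

/-! ## Eigenvalues and spectral machinery -/

open scoped Classical in
/-- The eigenvalues of a real symmetric matrix, arranged in nonincreasing order
(junk value `0` if the matrix is not symmetric). -/
noncomputable def eigval {n : ℕ} (X : Matrix (Fin n) (Fin n) ℝ) : Fin n → ℝ :=
  if h : X.IsHermitian then
    fun i => h.eigenvalues (Tuple.sort (fun j => -h.eigenvalues j) i)
  else 0

/-- `Oⁿ(X)`: orthogonal matrices realizing the ordered spectral decomposition of `X`. -/
def eigOrth {n : ℕ} (X : Matrix (Fin n) (Fin n) ℝ) : Set (Matrix (Fin n) (Fin n) ℝ) :=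
  {U | U * Uᵀ = 1 ∧ X = U * Matrix.diagonal (eigval X) * Uᵀ}

open scoped Classical in
/-- The block `α_m` of indices `j` whose eigenvalue `λ_j(X)` equals `λ_i(X)`. -/
noncomputable def blockSet {n : ℕ} (X : Matrix (Fin n) (Fin n) ℝ) (i : Fin n) :
    Finset (Fin n) :=
  Finset.univ.filter fun j => eigval X j = eigval X i

lemma mem_blockSet_self {n : ℕ} (X : Matrix (Fin n) (Fin n) ℝ) (i : Fin n) :
    i ∈ blockSet X i := by
  simp [blockSet]

/-- The increasing enumeration of the block of `i`. -/
noncomputable def blockEmb {n : ℕ} (X : Matrix (Fin n) (Fin n) ℝ) (i : Fin n) :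
    Fin (blockSet X i).card → Fin n :=
  fun a => ((blockSet X i).orderIsoOfFin rfl a : Fin n)

/-- The position of `i` inside its own block. -/
noncomputable def blockIdx {n : ℕ} (X : Matrix (Fin n) (Fin n) ℝ) (i : Fin n) :
    Fin (blockSet X i).card :=
  ((blockSet X i).orderIsoOfFin rfl).symm ⟨i, mem_blockSet_self X i⟩

/-- The principal submatrix of `M` corresponding to the block of `i` (for `X`). -/
noncomputable def blockMat {n : ℕ} (X M : Matrix (Fin n) (Fin n) ℝ) (i : Fin n) :
    Matrix (Fin (blockSet X i).card) (Fin (blockSet X i).card) ℝ :=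
  Matrix.of fun a b => M (blockEmb X i a) (blockEmb X i b)

/-- The directional derivative `λ'(X;H)` of the ordered eigenvalue map, computed through
`U ∈ Oⁿ(X)`: blockwise ordered eigenvalues of `U_{α_m}ᵀ H U_{α_m}`. -/
noncomputable def lambdaDir {n : ℕ} (X U H : Matrix (Fin n) (Fin n) ℝ) : Fin n → ℝ :=
  fun i => eigval (blockMat X (Uᵀ * H * U) i) (blockIdx X i)

open scoped Classical in
/-- The Moore–Penrose pseudoinverse of a square real matrix, characterized by the four
Penrose equations. -/
noncomputable def pinv {n : ℕ} (A : Matrix (Fin n) (Fin n) ℝ) :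
    Matrix (Fin n) (Fin n) ℝ :=
  if h : ∃ B : Matrix (Fin n) (Fin n) ℝ,
      A * B * A = A ∧ B * A * B = B ∧ (A * B)ᵀ = A * B ∧ (B * A)ᵀ = B * A
  then h.choose else 0

/-- The curvature term `2 ∑ₘ ⟨Diag(y)_{αₘαₘ}, U_{αₘ}ᵀ H (μₘ I - X)† H U_{αₘ}⟩`, written as a
single sum over all indices. -/
noncomputable def curvTerm {n : ℕ} (X U H : Matrix (Fin n) (Fin n) ℝ) (y : Fin n → ℝ) : ℝ :=
  2 * ∑ i : Fin n, y i *
    (Uᵀ * (H * pinv (eigval X i • (1 : Matrix (Fin n) (Fin n) ℝ) - X) * H) * U) i i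

/-- Two symmetric matrices admit a simultaneous ordered spectral decomposition. -/
def simOrdSpec {k : ℕ} (A B : Matrix (Fin k) (Fin k) ℝ) : Prop :=
  ∃ P : Matrix (Fin k) (Fin k) ℝ, P * Pᵀ = 1 ∧
    A = P * Matrix.diagonal (eigval A) * Pᵀ ∧
    B = P * Matrix.diagonal (eigval B) * Pᵀ

/-- The subspace of symmetric `n × n` real matrices. -/
def symSubmodule (n : ℕ) : Submodule ℝ (Matrix (Fin n) (Fin n) ℝ) where
  carrier := {A | A.IsSymm}
  add_mem' := by
    intro a b ha hb
    simp only [Set.mem_setOf_eq, Matrix.IsSymm] at *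
    rw [Matrix.transpose_add, ha, hb]
  zero_mem' := by
    simp only [Set.mem_setOf_eq, Matrix.IsSymm, Matrix.transpose_zero]
  smul_mem' := by
    intro c a ha
    simp only [Set.mem_setOf_eq, Matrix.IsSymm] at *
    rw [Matrix.transpose_smul, ha]

/-- The space `Sⁿ` of symmetric `n × n` real matrices. -/
abbrev Sym (n : ℕ) : Type := ↥(symSubmodule n)

/-- The trace inner product `⟨A, B⟩ = tr(AB)` on `Sⁿ`. -/
noncomputable def ipM {n : ℕ} (A B : Sym n) : ℝ :=
  ((A : Matrix (Fin n) (Fin n) ℝ) * (B : Matrix (Fin n) (Fin n) ℝ)).trace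

/-- The Euclidean inner product on `ℝⁿ`. -/
def ipV {n : ℕ} (v w : Fin n → ℝ) : ℝ :=
  ∑ i, v i * w i

/-- The spectral function `g = θ ∘ λ` on `Sⁿ`. -/
noncomputable def specFn {n : ℕ} (θ : (Fin n → ℝ) → EReal) : Sym n → EReal :=
  fun A => θ (eigval (A : Matrix (Fin n) (Fin n) ℝ))

/-- A function on `ℝⁿ` is symmetric (permutation invariant). -/
def SymmetricFn {n : ℕ} {α : Type*} (θ : (Fin n → ℝ) → α) : Prop :=
  ∀ (x : Fin n → ℝ) (σ : Equiv.Perm (Fin n)), θ (fun i => x (σ i)) = θ x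

/-- The diagonal matrix `Diag(w)` as an element of `Sⁿ`. -/
noncomputable def diagSym {n : ℕ} (w : Fin n → ℝ) : Sym n :=
  ⟨Matrix.diagonal w, Matrix.isSymm_diagonal w⟩

/-- The `i`-th order statistic: `orderStat x i` is the `i`-th largest entry of `x`. -/
noncomputable def orderStat {n : ℕ} (x : Fin n → ℝ) : Fin n → ℝ :=
  fun i => x (Tuple.sort (fun j => -x j) i)

/-
Put `w_t = (λ(X + tH') - λ(X)) / t`. Because `g(X + tH') = θ(λ(X) + t w_t)`, the difference
quotients of `g` and `θ` differ by a term which does not involve `θ`: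
  `Δ²ₜg(X,Y)(H') = Δ²ₜθ(λ(X),v)(w_t) + (2/t) (⟨v, w_t⟩ - ⟨Y, H'⟩)`.
The Hoffman–Wielandt inequality bounds `w_t`, so along every ultrafilter finer than
`t ↓ 0, H' → H` both `w_t` and the eigenvector matrix `P` of `X + tH'` in the basis `U` converge;
the limit of `w_t` is forced to be `λ'(X;H)`. For the second term, take `K` so large that
`v + K λ(X)` and `w_t + K λ(X)` are nonincreasing and apply the rearrangement inequality to the
doubly stochastic matrix `P ∘ P`: up to `O(t)` it leaves `(2/t²) ⟨v, λ(X) - (P ∘ P) λ(X)⟩`, and the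
entries of `P` linking different eigenvalues, divided by `t`, converge to the first-order
perturbation coefficients of the eigenvectors, which produce the curvature term.
-/

/-! ## Orthogonal matrices and the rearrangement inequality -/

section ColumnPermutation

variable {ι κ R : Type*} [Fintype ι] [NonAssocSemiring R]

lemma submatrix_id_mul_transpose (U : Matrix κ ι R) (σ : Equiv.Perm ι) :
    U.submatrix id σ * (U.submatrix id σ)ᵀ = U * Uᵀ := by
  rw [transpose_submatrix, submatrix_mul_equiv, submatrix_id_id]

lemma submatrix_id_conj_diagonal_comp [DecidableEq ι] (U : Matrix κ ι R) (σ : Equiv.Perm ι)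
    (y : ι → R) :
    U.submatrix id σ * diagonal (y ∘ σ) * (U.submatrix id σ)ᵀ = U * diagonal y * Uᵀ := by
  rw [← submatrix_diagonal_equiv, submatrix_mul_equiv, transpose_submatrix,
    submatrix_mul_equiv, submatrix_id_id]

end ColumnPermutation

section Rearrangement

variable {ι : Type*} [Fintype ι] [DecidableEq ι]

lemma dotProduct_mulVec_le_dotProduct_of_mem_doublyStochastic {R : Type*} [Field R]
    [LinearOrder R] [IsStrictOrderedRing R] {T : Matrix ι ι R} (hT : T ∈ doublyStochastic R ι)
    {a b : ι → R} (hab : Monovary a b) : a ⬝ᵥ T *ᵥ b ≤ a ⬝ᵥ b := by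
  have hconvex : Convex R {S : Matrix ι ι R | a ⬝ᵥ S *ᵥ b ≤ a ⬝ᵥ b} :=
    convex_halfSpace_le
      ⟨fun S S' => by rw [add_mulVec, dotProduct_add],
        fun c S => by rw [smul_mulVec, dotProduct_smul]⟩ _
  have hperm : {S | ∃ τ : Equiv.Perm ι, τ.permMatrix R = S} ⊆
      {S | a ⬝ᵥ S *ᵥ b ≤ a ⬝ᵥ b} := by
    rintro _ ⟨τ, rfl⟩
    rw [Set.mem_ofPred_eq, permMatrix_mulVec]
    exact hab.sum_mul_comp_perm_le_sum_mul
  refine convexHull_min hperm hconvex ?_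
  rwa [← doublyStochastic_eq_convexHull_permMatrix, SetLike.mem_coe]

lemma mul_diagonal_mul_transpose_apply_self {R κ : Type*} [CommSemiring R]
    (P : Matrix κ ι R) (b : ι → R) (i : κ) :
    (P * diagonal b * Pᵀ) i i = ((P ⊙ P) *ᵥ b) i := by
  rw [mul_apply]
  exact Finset.sum_congr rfl fun j _ => by
    rw [mul_diagonal, transpose_apply]
    exact mul_right_comm _ _ _

lemma trace_diagonal_mul_eq_dotProduct {R : Type*} [NonAssocSemiring R] (a : ι → R)
    (M : Matrix ι ι R) : (diagonal a * M).trace = a ⬝ᵥ fun i => M i i := by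
  simp only [trace, diag_apply, diagonal_mul, dotProduct]

lemma hadamard_self_mem_doublyStochastic {P : Matrix ι ι ℝ} (hP : P * Pᵀ = 1) :
    P ⊙ P ∈ doublyStochastic ℝ ι := by
  have hP' : Pᵀ * P = 1 := mul_eq_one_comm.mp hP
  refine mem_doublyStochastic_iff_sum.mpr ⟨fun i j => mul_self_nonneg _, fun i => ?_, fun j => ?_⟩
  · simpa [mul_apply] using congrFun₂ hP i i
  · simpa [mul_apply] using congrFun₂ hP' j j

lemma abs_apply_le_one_of_mul_transpose_eq_one {P : Matrix ι ι ℝ} (hP : P * Pᵀ = 1) (i j : ι) :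
    |P i j| ≤ 1 := by
  refine entry_norm_bound_of_unitary (𝕜 := ℝ) (mem_unitaryGroup_iff.mpr ?_) i j
  rwa [star_eq_conjTranspose, conjTranspose_eq_transpose_of_trivial]

lemma transpose_mul_mul_transpose_mul {P Q : Matrix ι ι ℝ} (hP : P * Pᵀ = 1) (hQ : Q * Qᵀ = 1) :
    (Pᵀ * Q) * (Pᵀ * Q)ᵀ = 1 := by
  rw [transpose_mul, transpose_transpose, Matrix.mul_assoc, ← Matrix.mul_assoc Q, hQ,
    Matrix.one_mul, mul_eq_one_comm.mp hP]

end Rearrangement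

/-! ## Ordered eigenvalues -/

section Eigval

variable {n : ℕ} {A B P : Matrix (Fin n) (Fin n) ℝ}

lemma eigval_antitone (A : Matrix (Fin n) (Fin n) ℝ) : Antitone (eigval A) := by
  unfold eigval
  split_ifs with hA
  · exact fun i j hij => neg_le_neg_iff.mp (Tuple.monotone_sort (fun k => -hA.eigenvalues k) hij)
  · exact antitone_const

lemma exists_mem_eigOrth (hA : A.IsHermitian) : ∃ P, P ∈ eigOrth A := by
  set V : Matrix (Fin n) (Fin n) ℝ := hA.eigenvectorUnitary.val
  have hV : V * Vᵀ = 1 := Unitary.coe_mul_star_self hA.eigenvectorUnitary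
  have hAV : A = V * diagonal hA.eigenvalues * Vᵀ := hA.spectral_theorem
  have hsorted : eigval A = hA.eigenvalues ∘ Tuple.sort fun k => -hA.eigenvalues k := by
    rw [eigval, dif_pos hA]
    rfl
  refine ⟨V.submatrix id (Tuple.sort fun k => -hA.eigenvalues k), ?_, ?_⟩
  · rw [submatrix_id_mul_transpose, hV]
  · rwa [hsorted, submatrix_id_conj_diagonal_comp]

lemma roots_charpoly_conj_diagonal (hP : P * Pᵀ = 1) (w : Fin n → ℝ) :
    (P * diagonal w * Pᵀ).charpoly.roots = List.ofFn w := by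
  rw [charpoly_mul_comm, ← Matrix.mul_assoc, mul_eq_one_comm.mp hP, Matrix.one_mul,
    charpoly_diagonal, ← Fin.univ_val_map]
  have hroots := Polynomial.roots_multiset_prod_X_sub_C (Multiset.map w Finset.univ.val)
  rwa [Multiset.map_map] at hroots

lemma eq_of_antitone_of_perm_ofFn {α : Type*} [PartialOrder α] {f g : Fin n → α}
    (hf : Antitone f) (hg : Antitone g) (hfg : (List.ofFn f).Perm (List.ofFn g)) : f = g :=
  List.ofFn_injective (hfg.eq_of_pairwise' hf.sortedGE_ofFn.pairwise hg.sortedGE_ofFn.pairwise)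

lemma isHermitian_conj_diagonal (P : Matrix (Fin n) (Fin n) ℝ) (w : Fin n → ℝ) :
    (P * diagonal w * Pᵀ).IsHermitian :=
  isHermitian_mul_mul_conjTranspose P (isHermitian_diagonal w)

lemma eigval_conj_diagonal {w : Fin n → ℝ} (hP : P * Pᵀ = 1) (hw : Antitone w) :
    eigval (P * diagonal w * Pᵀ) = w := by
  obtain ⟨Q, hQ, hPQ⟩ := exists_mem_eigOrth (isHermitian_conj_diagonal P w)
  refine eq_of_antitone_of_perm_ofFn (eigval_antitone _) hw (Multiset.coe_eq_coe.mp ?_)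
  rw [← roots_charpoly_conj_diagonal hQ, ← hPQ, roots_charpoly_conj_diagonal hP]

lemma trace_mul_le_dotProduct_eigval (hA : A.IsHermitian) (hB : B.IsHermitian) :
    (A * B).trace ≤ eigval A ⬝ᵥ eigval B := by
  obtain ⟨P, hP, hAP⟩ := exists_mem_eigOrth hA
  obtain ⟨Q, hQ, hBQ⟩ := exists_mem_eigOrth hB
  set R := Pᵀ * Q
  have hR : R * Rᵀ = 1 := transpose_mul_mul_transpose_mul hP hQ
  calc (A * B).trace
      = (P * (diagonal (eigval A) * Pᵀ * (Q * diagonal (eigval B) * Qᵀ))).trace := by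
        nth_rw 1 [hAP, hBQ]
        simp only [Matrix.mul_assoc]
    _ = (diagonal (eigval A) * (R * diagonal (eigval B) * Rᵀ)).trace := by
        rw [trace_mul_comm]
        simp only [R, transpose_mul, transpose_transpose, Matrix.mul_assoc]
    _ = eigval A ⬝ᵥ (R ⊙ R) *ᵥ eigval B := by
        simp only [trace_diagonal_mul_eq_dotProduct, mul_diagonal_mul_transpose_apply_self]
    _ ≤ eigval A ⬝ᵥ eigval B :=
        dotProduct_mulVec_le_dotProduct_of_mem_doublyStochastic
          (hadamard_self_mem_doublyStochastic hR)
          ((eigval_antitone A).monovary (eigval_antitone B))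

lemma trace_mul_self_eq_dotProduct_eigval (hA : A.IsHermitian) :
    (A * A).trace = eigval A ⬝ᵥ eigval A := by
  obtain ⟨P, hP, hAP⟩ := exists_mem_eigOrth hA
  have hP' : Pᵀ * P = 1 := mul_eq_one_comm.mp hP
  calc (A * A).trace
      = (P * (diagonal (eigval A) * (Pᵀ * P) * diagonal (eigval A) * Pᵀ)).trace := by
        nth_rw 1 2 [hAP]
        simp only [Matrix.mul_assoc]
    _ = eigval A ⬝ᵥ eigval A := by
        rw [trace_mul_comm, Matrix.mul_assoc, hP', Matrix.mul_one, Matrix.mul_one,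
          trace_diagonal_mul_eq_dotProduct]
        simp only [diagonal_apply_eq]

/-- The Hoffman–Wielandt inequality. -/
lemma dotProduct_eigval_sub_self_le_trace (hA : A.IsHermitian) (hB : B.IsHermitian) :
    (eigval A - eigval B) ⬝ᵥ (eigval A - eigval B) ≤ ((A - B) * (A - B)).trace := by
  have htrace : ((A - B) * (A - B)).trace
      = (A * A).trace - 2 * (A * B).trace + (B * B).trace := by
    rw [sub_mul, mul_sub, mul_sub, trace_sub, trace_sub, trace_sub, trace_mul_comm B A]
    ring
  rw [htrace, trace_mul_self_eq_dotProduct_eigval hA, trace_mul_self_eq_dotProduct_eigval hB,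
    sub_dotProduct, dotProduct_sub, dotProduct_sub, dotProduct_comm (eigval B) (eigval A)]
  linarith [trace_mul_le_dotProduct_eigval hA hB]

end Eigval

/-! ## Moore–Penrose inverses -/

section MoorePenrose

variable {m k R : Type*} [Fintype k] [CommSemiring R]

lemma transpose_conj_diagonal [DecidableEq k] (U : Matrix m k R) (a : k → R) :
    (U * diagonal a * Uᵀ)ᵀ = U * diagonal a * Uᵀ := by
  rw [transpose_mul, transpose_mul, transpose_transpose, diagonal_transpose, Matrix.mul_assoc]

variable [Fintype m]

lemma conj_diagonal_mul_conj_diagonal [DecidableEq k] {U : Matrix m k R} (hU : Uᵀ * U = 1)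
    (a b : k → R) :
    U * diagonal a * Uᵀ * (U * diagonal b * Uᵀ) = U * diagonal (a * b) * Uᵀ :=
  calc U * diagonal a * Uᵀ * (U * diagonal b * Uᵀ)
      = U * diagonal a * (Uᵀ * U) * diagonal b * Uᵀ := by simp only [Matrix.mul_assoc]
    _ = U * diagonal (a * b) * Uᵀ := by
        rw [hU, Matrix.mul_one, Matrix.mul_assoc U, diagonal_mul_diagonal]
        rfl

/-- The four Penrose equations, characterizing `B` as the Moore–Penrose inverse of `A`. The
transpose stands for the adjoint, so over `ℝ` this is the usual notion. -/
def IsMoorePenrose (A : Matrix m k R) (B : Matrix k m R) : Prop :=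
  A * B * A = A ∧ B * A * B = B ∧ (A * B)ᵀ = A * B ∧ (B * A)ᵀ = B * A

lemma IsMoorePenrose.unique {A : Matrix m k R} {B C : Matrix k m R} (hB : IsMoorePenrose A B)
    (hC : IsMoorePenrose A C) : B = C := by
  obtain ⟨hABA, hBAB, hAB, hBA⟩ := hB
  obtain ⟨hACA, hCAC, hAC, hCA⟩ := hC
  have hleft : A * B = A * C :=
    calc A * B = (A * C * (A * B))ᵀ := by rw [← Matrix.mul_assoc, hACA, hAB]
      _ = A * B * A * C := by rw [transpose_mul, hAB, hAC, Matrix.mul_assoc _ A]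
      _ = A * C := by rw [hABA]
  have hright : B * A = C * A :=
    calc B * A = (B * A * (C * A))ᵀ := by
          rw [Matrix.mul_assoc, ← Matrix.mul_assoc A, hACA, hBA]
      _ = C * (A * B * A) := by
          rw [transpose_mul, hBA, hCA, Matrix.mul_assoc, Matrix.mul_assoc]
      _ = C * A := by rw [hABA]
  calc B = B * A * B := hBAB.symm
    _ = C * A * C := by rw [hright, Matrix.mul_assoc, hleft, Matrix.mul_assoc]
    _ = C := hCAC

lemma isMoorePenrose_conj_diagonal {K : Type*} [Field K] [DecidableEq k] {U : Matrix m k K}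
    (hU : Uᵀ * U = 1) (d : k → K) :
    IsMoorePenrose (U * diagonal d * Uᵀ) (U * diagonal d⁻¹ * Uᵀ) := by
  refine ⟨?_, ?_, ?_, ?_⟩ <;>
    simp only [conj_diagonal_mul_conj_diagonal hU, transpose_conj_diagonal]
  · congr 3 with j
    exact mul_inv_mul_cancel (d j)
  · congr 3 with j
    simpa only [Pi.mul_apply, Pi.inv_apply, inv_inv] using mul_inv_mul_cancel (d j)⁻¹

lemma pinv_eq_of_isMoorePenrose {n : ℕ} {A B : Matrix (Fin n) (Fin n) ℝ}
    (hAB : IsMoorePenrose A B) : pinv A = B := by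
  have hexists : ∃ C : Matrix (Fin n) (Fin n) ℝ,
      A * C * A = A ∧ C * A * C = C ∧ (A * C)ᵀ = A * C ∧ (C * A)ᵀ = C * A := ⟨B, hAB⟩
  rw [pinv, dif_pos hexists]
  exact IsMoorePenrose.unique hexists.choose_spec hAB

end MoorePenrose

/-! ## Matrices commuting with a diagonal matrix -/

section Blocks

variable {ι : Type*} [Fintype ι] [DecidableEq ι] {μ : ι → ℝ} {B P : Matrix ι ι ℝ}

lemma commute_diagonal_iff : Commute (diagonal μ) B ↔ ∀ i j, μ i ≠ μ j → B i j = 0 := by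
  simp only [Commute, SemiconjBy, ← Matrix.ext_iff, diagonal_mul, mul_diagonal, mul_comm (B _ _),
    mul_eq_mul_right_iff, or_iff_not_imp_left, ne_eq]

lemma commute_diagonal_comp (hB : Commute (diagonal μ) B) (f : ℝ → ℝ) :
    Commute (diagonal (f ∘ μ)) B :=
  commute_diagonal_iff.mpr fun i j hij =>
    commute_diagonal_iff.mp hB i j fun hμ => hij (congrArg f hμ)

lemma commute_diagonal_transpose (hB : Commute (diagonal μ) B) : Commute (diagonal μ) Bᵀ :=
  commute_diagonal_iff.mpr fun i j hij => commute_diagonal_iff.mp hB j i hij.symm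

lemma submatrix_mul_of_commute_diagonal {κ : Type*} [Fintype κ] {c : ℝ} {e : κ → ι}
    (he : Function.Injective e) (hrange : ∀ j, j ∈ Set.range e ↔ μ j = c) (A : Matrix ι ι ℝ)
    (hB : Commute (diagonal μ) B) :
    (A * B).submatrix e e = A.submatrix e e * B.submatrix e e := by
  ext a b
  have hb : μ (e b) = c := (hrange _).mp ⟨b, rfl⟩
  refine (Fintype.sum_of_injective e he _ (fun j => A (e a) j * B j (e b)) ?_ fun _ => rfl).symm
  intro j hj
  rw [commute_diagonal_iff.mp hB j (e b) (fun h => hj ((hrange j).mpr (h.trans hb))), mul_zero]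

/-- The second-order Rayleigh–Schrödinger correction `∑_{μⱼ ≠ μᵢ} Gᵢⱼ² / (μᵢ - μⱼ)` to the
eigenvalue `μᵢ` of `Diag μ` under the perturbation `G`. The indices with `μⱼ = μᵢ` drop out of
the sum because division by zero gives zero. -/
def secondOrderCorrection (μ : ι → ℝ) (G : Matrix ι ι ℝ) (i : ι) : ℝ :=
  ∑ j, G i j ^ 2 / (μ i - μ j)

lemma secondOrderCorrection_eq_conj_diagonal_apply (μ : ι → ℝ) (G : Matrix ι ι ℝ) (i : ι) :
    secondOrderCorrection μ G i = (G * diagonal (fun j => μ i - μ j)⁻¹ * Gᵀ) i i := by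
  rw [mul_diagonal_mul_transpose_apply_self]
  exact Finset.sum_congr rfl fun j _ => by rw [sq]; rfl

lemma secondOrderCorrection_mul_right (G : Matrix ι ι ℝ) (hP : P * Pᵀ = 1)
    (hμP : Commute (diagonal μ) P) :
    secondOrderCorrection μ (G * P) = secondOrderCorrection μ G := by
  funext i
  have hD : Commute (diagonal (fun j => μ i - μ j)⁻¹) P :=
    commute_diagonal_comp hμP fun x => (μ i - x)⁻¹
  simp only [secondOrderCorrection_eq_conj_diagonal_apply]
  rw [transpose_mul, Matrix.mul_assoc G P, ← hD.eq, ← Matrix.mul_assoc G, Matrix.mul_assoc _ P,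
    ← Matrix.mul_assoc P, hP, Matrix.one_mul]

end Blocks

section Curvature

variable {n : ℕ} {X U H : Matrix (Fin n) (Fin n) ℝ}

lemma smul_one_sub_eq_conj_diagonal (hU : U ∈ eigOrth X) (c : ℝ) :
    c • 1 - X = U * diagonal (fun j => c - eigval X j) * Uᵀ := by
  have hc : c • (1 : Matrix (Fin n) (Fin n) ℝ) = U * diagonal (fun _ => c) * Uᵀ := by
    rw [← smul_one_eq_diagonal, Matrix.mul_smul, Matrix.mul_one, Matrix.smul_mul, hU.1]
  rw [← diagonal_sub, mul_sub, sub_mul, ← hU.2, hc]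

lemma curvTerm_eq_dotProduct_secondOrderCorrection (hU : U ∈ eigOrth X) (hH : Hᵀ = H)
    (y : Fin n → ℝ) :
    curvTerm X U H y = 2 * (y ⬝ᵥ secondOrderCorrection (eigval X) (Uᵀ * H * U)) := by
  have hG : (Uᵀ * H * U)ᵀ = Uᵀ * H * U := by
    rw [transpose_mul, transpose_mul, transpose_transpose, hH, Matrix.mul_assoc]
  unfold curvTerm dotProduct
  congr! 3 with i
  rw [secondOrderCorrection_eq_conj_diagonal_apply, hG, smul_one_sub_eq_conj_diagonal hU,
    pinv_eq_of_isMoorePenrose (isMoorePenrose_conj_diagonal (mul_eq_one_comm.mp hU.1) _)]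
  simp only [Matrix.mul_assoc]

variable {σ : Equiv.Perm (Fin n)}

lemma submatrix_id_mem_eigOrth (hU : U ∈ eigOrth X) (hσ : eigval X ∘ σ = eigval X) :
    U.submatrix id σ ∈ eigOrth X := by
  refine ⟨by rw [submatrix_id_mul_transpose, hU.1], ?_⟩
  conv_rhs => rw [← hσ, submatrix_id_conj_diagonal_comp, ← hU.2]

lemma curvTerm_submatrix_id_comp (hσ : eigval X ∘ σ = eigval X) (y : Fin n → ℝ) :
    curvTerm X (U.submatrix id σ) H (y ∘ σ) = curvTerm X U H y := by
  have hentry (M : Matrix (Fin n) (Fin n) ℝ) (i : Fin n) :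
      ((U.submatrix id σ)ᵀ * M * U.submatrix id σ) i i = (Uᵀ * M * U) (σ i) (σ i) := rfl
  have hσi (i : Fin n) : eigval X (σ i) = eigval X i := congrFun hσ i
  simp only [curvTerm, hentry, Function.comp_apply]
  conv_rhs => rw [← Equiv.sum_comp σ]
  simp only [hσi]

end Curvature

section LambdaDir

/-- The vector `w` is nonincreasing along each block of indices on which `μ` is constant. -/
def BlockAntitone {ι : Type*} [Preorder ι] (μ w : ι → ℝ) : Prop :=
  ∀ ⦃i j⦄, i ≤ j → μ i = μ j → w j ≤ w i

variable {n : ℕ} {X : Matrix (Fin n) (Fin n) ℝ}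

lemma mem_range_blockEmb (i j : Fin n) :
    j ∈ Set.range (blockEmb X i) ↔ eigval X j = eigval X i := by
  have hrange : Set.range (blockEmb X i) = blockSet X i := by
    rw [show blockEmb X i = Subtype.val ∘ (blockSet X i).orderIsoOfFin rfl from rfl,
      Set.range_comp, OrderIso.range_eq, Set.image_univ, Subtype.range_val]
  rw [hrange, Finset.mem_coe, blockSet, Finset.mem_filter_univ]

lemma eigval_blockEmb (i : Fin n) (a : Fin (blockSet X i).card) :
    eigval X (blockEmb X i a) = eigval X i :=
  (mem_range_blockEmb i _).mp ⟨a, rfl⟩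

lemma blockEmb_strictMono (i : Fin n) : StrictMono (blockEmb X i) :=
  fun _ _ hab => ((blockSet X i).orderIsoOfFin rfl).strictMono hab

lemma blockEmb_blockIdx (i : Fin n) : blockEmb X i (blockIdx X i) = i :=
  congrArg Subtype.val (((blockSet X i).orderIsoOfFin rfl).apply_symm_apply _)

lemma blockMat_mul_of_commute_diagonal (A : Matrix (Fin n) (Fin n) ℝ)
    {B : Matrix (Fin n) (Fin n) ℝ} (hB : Commute (diagonal (eigval X)) B) (i : Fin n) :
    blockMat X (A * B) i = blockMat X A i * blockMat X B i :=
  submatrix_mul_of_commute_diagonal (blockEmb_strictMono i).injective (mem_range_blockEmb i) A hB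

lemma lambdaDir_eq_of_blockwise_eigenvectors {U H P : Matrix (Fin n) (Fin n) ℝ} {w : Fin n → ℝ}
    (hP : P * Pᵀ = 1) (hXP : Commute (diagonal (eigval X)) P)
    (heig : ∀ i j, eigval X i = eigval X j → (Uᵀ * H * U * P) i j = P i j * w j)
    (hw : BlockAntitone (eigval X) w) : lambdaDir X U H = w := by
  funext i
  set G := Uᵀ * H * U
  set e := blockEmb X i
  have horth : blockMat X P i * (blockMat X P i)ᵀ = 1 := by
    have hmul := blockMat_mul_of_commute_diagonal P (commute_diagonal_transpose hXP) i
    rw [hP] at hmul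
    exact hmul.symm.trans (submatrix_one _ (blockEmb_strictMono i).injective)
  have hGP : blockMat X G i * blockMat X P i = blockMat X P i * diagonal (w ∘ e) := by
    rw [← blockMat_mul_of_commute_diagonal G hXP]
    ext a b
    rw [mul_diagonal]
    exact heig _ _ ((eigval_blockEmb i a).trans (eigval_blockEmb i b).symm)
  have hG : blockMat X G i = blockMat X P i * diagonal (w ∘ e) * (blockMat X P i)ᵀ := by
    rw [← hGP, Matrix.mul_assoc, horth, Matrix.mul_one]
  have hwe : Antitone (w ∘ e) := fun a b hab =>
    hw ((blockEmb_strictMono i).monotone hab)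
      ((eigval_blockEmb i a).trans (eigval_blockEmb i b).symm)
  calc eigval (blockMat X G i) (blockIdx X i)
      = w (e (blockIdx X i)) := by rw [hG, eigval_conj_diagonal horth hwe, Function.comp_apply]
    _ = w i := congrArg w (blockEmb_blockIdx i)

end LambdaDir

/-! ## Second-order expansion of a spectral decomposition -/

lemma sub_mulVec_apply_of_sum_row_eq_one {ι R : Type*} [Fintype ι] [Ring R] {T : Matrix ι ι R}
    {μ : ι → R} (hT : ∀ i, ∑ j, T i j = 1) (i : ι) :
    (μ - T *ᵥ μ) i = ∑ j, T i j * (μ i - μ j) := by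
  simp only [mul_sub, Finset.sum_sub_distrib, ← Finset.sum_mul, hT, one_mul]
  rfl

lemma tendsto_dotProduct {ι α R : Type*} [Fintype ι] [NonUnitalNonAssocSemiring R]
    [TopologicalSpace R] [ContinuousAdd R] [ContinuousMul R] {F : Filter α} {f g : α → ι → R}
    {a b : ι → R} (hf : Tendsto f F (𝓝 a)) (hg : Tendsto g F (𝓝 b)) :
    Tendsto (fun x => f x ⬝ᵥ g x) F (𝓝 (a ⬝ᵥ b)) :=
  ((continuous_fst.dotProduct continuous_snd).tendsto (a, b)).comp (hf.prodMk_nhds hg)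

section FixedTime

variable {ι : Type*} [Fintype ι] [DecidableEq ι] {μ v w : ι → ℝ} {T G P : Matrix ι ι ℝ} {t K : ℝ}

lemma mul_apply_of_decomposition (hP : P * Pᵀ = 1)
    (hdec : diagonal μ + t • G = P * diagonal (μ + t • w) * Pᵀ) (i j : ι) :
    t * (G * P) i j = (μ j + t * w j - μ i) * P i j := by
  have hmul : (diagonal μ + t • G) * P = P * diagonal (μ + t • w) := by
    rw [hdec, Matrix.mul_assoc, mul_eq_one_comm.mp hP, Matrix.mul_one]
  have hentry := congrFun₂ hmul i j
  rw [add_mul, Matrix.smul_mul, Matrix.add_apply, Matrix.smul_apply, diagonal_mul, mul_diagonal,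
    Pi.add_apply, Pi.smul_apply, smul_eq_mul, smul_eq_mul] at hentry
  linarith

lemma smul_diag_of_decomposition (hdec : diagonal μ + t • G = P * diagonal (μ + t • w) * Pᵀ) :
    t • G.diag = (P ⊙ P) *ᵥ (μ + t • w) - μ := by
  funext i
  have hentry := congrFun₂ hdec i i
  rw [mul_diagonal_mul_transpose_apply_self, Matrix.add_apply, diagonal_apply_eq] at hentry
  exact eq_sub_of_add_eq' hentry

-- The rearrangement inequality for `v + K μ` and `w + K μ`, solved for `⟨v, w - T w⟩`.
lemma le_dotProduct_sub_mulVec_of_monovary (hT : T ∈ doublyStochastic ℝ ι)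
    (hvw : Monovary (v + K • μ) (w + K • μ)) :
    -K * (v ⬝ᵥ (μ - T *ᵥ μ) + (μ - Tᵀ *ᵥ μ) ⬝ᵥ w + K * (μ ⬝ᵥ (μ - T *ᵥ μ))) ≤
      v ⬝ᵥ (w - T *ᵥ w) := by
  have hrearr := dotProduct_mulVec_le_dotProduct_of_mem_doublyStochastic hT hvw
  simp only [mulVec_add, mulVec_smul, add_dotProduct, dotProduct_add, smul_dotProduct,
    dotProduct_smul, smul_eq_mul, dotProduct_mulVec μ T w, ← mulVec_transpose] at hrearr
  simp only [sub_dotProduct, dotProduct_sub]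
  linarith

lemma le_dotProduct_sub_diag_of_decomposition (ht : 0 < t) (hP : P * Pᵀ = 1)
    (hdec : diagonal μ + t • G = P * diagonal (μ + t • w) * Pᵀ)
    (hvw : Monovary (v + K • μ) (w + K • μ)) :
    2 * (v ⬝ᵥ (t ^ 2)⁻¹ • (μ - (P ⊙ P) *ᵥ μ)) -
        t * (2 * K * (v ⬝ᵥ (t ^ 2)⁻¹ • (μ - (P ⊙ P) *ᵥ μ)
          + (t ^ 2)⁻¹ • (μ - (P ⊙ P)ᵀ *ᵥ μ) ⬝ᵥ w
          + K * (μ ⬝ᵥ (t ^ 2)⁻¹ • (μ - (P ⊙ P) *ᵥ μ)))) ≤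
      2 / t * (v ⬝ᵥ w - v ⬝ᵥ G.diag) := by
  have hrearr := le_dotProduct_sub_mulVec_of_monovary (hadamard_self_mem_doublyStochastic hP) hvw
  have hdiag : t * (v ⬝ᵥ w - v ⬝ᵥ G.diag) =
      v ⬝ᵥ (μ - (P ⊙ P) *ᵥ μ) + t * (v ⬝ᵥ (w - (P ⊙ P) *ᵥ w)) := by
    rw [mul_sub, ← smul_eq_mul t (v ⬝ᵥ G.diag), ← dotProduct_smul,
      smul_diag_of_decomposition hdec, mulVec_add, mulVec_smul]
    simp only [dotProduct_sub, dotProduct_add, dotProduct_smul, smul_eq_mul]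
    ring
  simp only [dotProduct_smul, smul_dotProduct, smul_eq_mul]
  generalize v ⬝ᵥ (μ - (P ⊙ P) *ᵥ μ) = a at *
  generalize (μ - (P ⊙ P)ᵀ *ᵥ μ) ⬝ᵥ w = b at *
  generalize μ ⬝ᵥ (μ - (P ⊙ P) *ᵥ μ) = d at *
  calc _ = 2 / t ^ 2 * (a + t * (-K * (a + b + K * d))) := by field_simp; ring
    _ ≤ 2 / t ^ 2 * (t * (v ⬝ᵥ w - v ⬝ᵥ G.diag)) := by rw [hdiag]; gcongr
    _ = 2 / t * (v ⬝ᵥ w - v ⬝ᵥ G.diag) := by field_simp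

end FixedTime

section OrderedShift

variable {ι : Type*} {μ w : ι → ℝ} {t : ℝ}

lemma blockAntitone_of_antitone_add_smul [Preorder ι] (ht : 0 < t)
    (hw : Antitone (μ + t • w)) : BlockAntitone μ w := by
  intro i j hij hμ
  have hle := hw hij
  simp only [Pi.add_apply, Pi.smul_apply, smul_eq_mul, hμ, add_le_add_iff_left] at hle
  exact le_of_mul_le_mul_left hle ht

lemma eventually_atTop_antitone_add_smul [Finite ι] [PartialOrder ι] (hμ : Antitone μ) (C : ℝ) :
    ∀ᶠ K : ℝ in atTop,
      ∀ w : ι → ℝ, BlockAntitone μ w → (∀ i, |w i| ≤ C) → Antitone (w + K • μ) := by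
  have hgap (i j : ι) : ∀ᶠ K : ℝ in atTop, μ j < μ i → 2 * C ≤ K * (μ i - μ j) := by
    by_cases hij : μ j < μ i
    · filter_upwards [(tendsto_id.atTop_mul_const (sub_pos.mpr hij)).eventually_ge_atTop (2 * C)]
        with K hK _ using hK
    · exact Eventually.of_forall fun K h => absurd h hij
  filter_upwards [eventually_all.mpr fun i => eventually_all.mpr (hgap i)]
    with K hK w hw hwC i j hij
  simp only [Pi.add_apply, Pi.smul_apply, smul_eq_mul]
  rcases (hμ hij).eq_or_lt with hμij | hμij
  · rw [hμij]
    gcongr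
    exact hw hij hμij.symm
  · linarith [hK i j hμij, (abs_le.mp (hwC i)).1, (abs_le.mp (hwC j)).2]

end OrderedShift

/-- Spectral decompositions `Diag μ + t G = P Diag (μ + t w) Pᵀ`, ordered nonincreasingly, whose
data satisfy `t ↓ 0`, `G → G₀`, `P → P₀` and `w → w₀` along the filter `F`. The vector `w` is the
difference quotient of the eigenvalues. -/
structure SpectralExpansion {ι α : Type*} [Fintype ι] [LinearOrder ι] (F : Filter α) (μ : ι → ℝ)
    (t : α → ℝ) (G P : α → Matrix ι ι ℝ) (w : α → ι → ℝ) (G₀ P₀ : Matrix ι ι ℝ)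
    (w₀ : ι → ℝ) : Prop where
  tendsto_time : Tendsto t F (𝓝[>] 0)
  tendsto_direction : Tendsto G F (𝓝 G₀)
  tendsto_basis : Tendsto P F (𝓝 P₀)
  tendsto_slope : Tendsto w F (𝓝 w₀)
  orthogonal : ∀ᶠ x in F, P x * (P x)ᵀ = 1
  decomposition : ∀ᶠ x in F, diagonal μ + t x • G x = P x * diagonal (μ + t x • w x) * (P x)ᵀ
  antitone : ∀ᶠ x in F, Antitone (μ + t x • w x)

namespace SpectralExpansion

variable {ι α : Type*} [Fintype ι] [LinearOrder ι] {F : Filter α} {μ v : ι → ℝ}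
  {t : α → ℝ} {G P : α → Matrix ι ι ℝ} {w : α → ι → ℝ} {G₀ P₀ : Matrix ι ι ℝ} {w₀ : ι → ℝ}

section Limits

variable (h : SpectralExpansion F μ t G P w G₀ P₀ w₀)
include h

lemma eventually_pos : ∀ᶠ x in F, 0 < t x :=
  h.tendsto_time.eventually self_mem_nhdsWithin

lemma tendsto_time_zero : Tendsto t F (𝓝 0) :=
  h.tendsto_time.mono_right nhdsWithin_le_nhds

lemma tendsto_mul_apply (i j : ι) : Tendsto (fun x => (G x * P x) i j) F (𝓝 ((G₀ * P₀) i j)) :=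
  ((h.tendsto_direction.mul h.tendsto_basis).apply_nhds i).apply_nhds j

lemma tendsto_basis_apply (i j : ι) : Tendsto (fun x => P x i j) F (𝓝 (P₀ i j)) :=
  (h.tendsto_basis.apply_nhds i).apply_nhds j

lemma eventually_mul_apply (i j : ι) :
    ∀ᶠ x in F, t x * (G x * P x) i j = (μ j + t x * w x j - μ i) * P x i j := by
  filter_upwards [h.orthogonal, h.decomposition] with x hP hdec
  exact mul_apply_of_decomposition hP hdec i j

lemma tendsto_gap (i j : ι) :
    Tendsto (fun x => μ j + t x * w x j - μ i) F (𝓝 (μ j - μ i)) := by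
  simpa using ((h.tendsto_time_zero.mul (h.tendsto_slope.apply_nhds j)).const_add
    (μ j)).sub_const (μ i)

lemma eventually_blockAntitone : ∀ᶠ x in F, BlockAntitone μ (w x) := by
  filter_upwards [h.eventually_pos, h.antitone] with x ht hw
  exact blockAntitone_of_antitone_add_smul ht hw

lemma tendsto_basis_div_time {i j : ι} (hij : μ i ≠ μ j) :
    Tendsto (fun x => P x i j / t x) F (𝓝 ((G₀ * P₀) i j / (μ j - μ i))) := by
  have hgap : μ j - μ i ≠ 0 := sub_ne_zero.mpr hij.symm
  refine ((h.tendsto_mul_apply i j).div (h.tendsto_gap i j) hgap).congr' ?_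
  filter_upwards [h.eventually_mul_apply i j, (h.tendsto_gap i j).eventually_ne hgap,
    h.eventually_pos] with x hentry hgap ht
  rw [Pi.div_apply, div_eq_div_iff hgap ht.ne', mul_comm, hentry, mul_comm]

lemma tendsto_sq_basis_mul_gap_div (i j : ι) :
    Tendsto (fun x => (t x ^ 2)⁻¹ * ((P x ⊙ P x) i j * (μ i - μ j))) F
      (𝓝 ((G₀ * P₀) i j ^ 2 / (μ i - μ j))) := by
  rcases eq_or_ne (μ i) (μ j) with hij | hij
  · simp only [hij, sub_self, mul_zero, div_zero, tendsto_const_nhds]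
  · have hgap : μ i - μ j ≠ 0 := sub_ne_zero.mpr hij
    have hlim : ((G₀ * P₀) i j / (μ j - μ i)) ^ 2 * (μ i - μ j) =
        (G₀ * P₀) i j ^ 2 / (μ i - μ j) := by
      rw [← neg_sub, div_neg, neg_sq]
      field_simp
    rw [← hlim]
    refine (((h.tendsto_basis_div_time hij).pow 2).mul_const (μ i - μ j)).congr fun x => ?_
    rw [hadamard_apply]
    ring

lemma tendsto_defect :
    Tendsto (fun x => (t x ^ 2)⁻¹ • (μ - (P x ⊙ P x) *ᵥ μ)) F
      (𝓝 (secondOrderCorrection μ (G₀ * P₀))) := by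
  refine tendsto_pi_nhds.mpr fun i => ?_
  refine (tendsto_finsetSum _ fun j _ => h.tendsto_sq_basis_mul_gap_div i j).congr' ?_
  filter_upwards [h.orthogonal] with x hP
  rw [Pi.smul_apply, sub_mulVec_apply_of_sum_row_eq_one
    (sum_row_of_mem_doublyStochastic (hadamard_self_mem_doublyStochastic hP)), smul_eq_mul,
    Finset.mul_sum]

lemma tendsto_transpose_defect :
    Tendsto (fun x => (t x ^ 2)⁻¹ • (μ - (P x ⊙ P x)ᵀ *ᵥ μ)) F
      (𝓝 (secondOrderCorrection μ (G₀ * P₀)ᵀ)) := by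
  refine tendsto_pi_nhds.mpr fun j => ?_
  have hlim : ∑ i, -((G₀ * P₀) i j ^ 2 / (μ i - μ j)) = secondOrderCorrection μ (G₀ * P₀)ᵀ j :=
    Finset.sum_congr rfl fun i _ => by rw [← div_neg, neg_sub, transpose_apply]
  rw [← hlim]
  refine (tendsto_finsetSum _ fun i _ => (h.tendsto_sq_basis_mul_gap_div i j).neg).congr' ?_
  filter_upwards [h.orthogonal] with x hP
  rw [Pi.smul_apply, sub_mulVec_apply_of_sum_row_eq_one (sum_row_of_mem_doublyStochastic
    (transpose_mem_doublyStochastic_iff.mpr (hadamard_self_mem_doublyStochastic hP))),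
    smul_eq_mul, Finset.mul_sum]
  exact Finset.sum_congr rfl fun i _ => by rw [transpose_apply, ← neg_sub (μ i)]; ring

lemma exists_eventually_antitone_add_smul (hμ : Antitone μ) (hv : BlockAntitone μ v) :
    ∃ K : ℝ, Antitone (v + K • μ) ∧ ∀ᶠ x in F, Antitone (w x + K • μ) := by
  obtain ⟨K, hK⟩ := (eventually_atTop_antitone_add_smul hμ (max ‖v‖ (‖w₀‖ + 1))).exists
  refine ⟨K, hK v hv fun i => (norm_le_pi_norm v i).trans (le_max_left _ _), ?_⟩
  have hbound : ∀ᶠ x in F, ‖w x‖ < ‖w₀‖ + 1 :=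
    h.tendsto_slope.norm.eventually_lt_const (lt_add_one _)
  filter_upwards [h.eventually_blockAntitone, hbound] with x hw hwx
  exact hK (w x) hw fun i => (norm_le_pi_norm (w x) i).trans (hwx.le.trans (le_max_right _ _))

variable [F.NeBot]

lemma orthogonal_limit : P₀ * P₀ᵀ = 1 :=
  tendsto_nhds_unique_of_eventuallyEq
    (h.tendsto_basis.mul ((continuous_id.matrix_transpose.tendsto _).comp h.tendsto_basis))
    tendsto_const_nhds h.orthogonal

lemma commute_limit : Commute (diagonal μ) P₀ := by
  refine commute_diagonal_iff.mpr fun i j hij => ?_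
  have hzero : (0 : ℝ) * (G₀ * P₀) i j = (μ j - μ i) * P₀ i j :=
    tendsto_nhds_unique_of_eventuallyEq (h.tendsto_time_zero.mul (h.tendsto_mul_apply i j))
      ((h.tendsto_gap i j).mul (h.tendsto_basis_apply i j)) (h.eventually_mul_apply i j)
  rw [zero_mul] at hzero
  exact (mul_eq_zero.mp hzero.symm).resolve_left (sub_ne_zero.mpr hij.symm)

lemma mul_apply_limit {i j : ι} (hij : μ i = μ j) : (G₀ * P₀) i j = P₀ i j * w₀ j := by
  refine tendsto_nhds_unique_of_eventuallyEq (h.tendsto_mul_apply i j)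
    ((h.tendsto_basis_apply i j).mul (h.tendsto_slope.apply_nhds j)) ?_
  filter_upwards [h.eventually_mul_apply i j, h.eventually_pos] with x hentry ht
  refine mul_left_cancel₀ ht.ne' ?_
  rw [hentry, hij]
  ring

lemma blockAntitone_limit : BlockAntitone μ w₀ := fun i j hij hμ =>
  le_of_tendsto_of_tendsto (h.tendsto_slope.apply_nhds j) (h.tendsto_slope.apply_nhds i)
    (h.eventually_blockAntitone.mono fun _ hw => hw hij hμ)

lemma eventually_lt_dotProduct_sub_diag (hμ : Antitone μ) (hv : BlockAntitone μ v) {c : ℝ}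
    (hc : c < 2 * (v ⬝ᵥ secondOrderCorrection μ G₀)) :
    ∀ᶠ x in F, c < 2 / t x * (v ⬝ᵥ w x - v ⬝ᵥ (G x).diag) := by
  obtain ⟨K, hvK, hwK⟩ := h.exists_eventually_antitone_add_smul hμ hv
  have hd := h.tendsto_defect
  rw [secondOrderCorrection_mul_right G₀ h.orthogonal_limit h.commute_limit] at hd
  have hvd := tendsto_dotProduct (tendsto_const_nhds (x := v)) hd
  have herror := ((hvd.add (tendsto_dotProduct h.tendsto_transpose_defect h.tendsto_slope)).add
    ((tendsto_dotProduct (tendsto_const_nhds (x := μ)) hd).const_mul K)).const_mul (2 * K)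
  have hlower := (hvd.const_mul 2).sub (h.tendsto_time_zero.mul herror)
  rw [zero_mul, sub_zero] at hlower
  filter_upwards [hlower.eventually_const_lt hc, h.eventually_pos, h.orthogonal,
    h.decomposition, hwK] with x hcx ht hP hdec hwx
  exact hcx.trans_le (le_dotProduct_sub_diag_of_decomposition ht hP hdec (hvK.monovary hwx))

end Limits

end SpectralExpansion

/-! ## The second subderivative of a spectral function -/

lemma exists_tendsto_of_eventually_mem_isCompact {α β : Type*} [TopologicalSpace β] {K : Set β}
    (hK : IsCompact K) (F : Ultrafilter α) {f : α → β} (hf : ∀ᶠ x in F, f x ∈ K) :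
    ∃ b, Tendsto f F (𝓝 b) := by
  obtain ⟨b, -, hb⟩ := hK.ultrafilter_le_nhds' (F.map f) hf
  exact ⟨b, hb⟩

lemma isCompact_setOf_abs_apply_le {m n : Type*} (r : ℝ) :
    IsCompact {P : Matrix m n ℝ | ∀ i j, |P i j| ≤ r} := by
  have hcube : {P : Matrix m n ℝ | ∀ i j, |P i j| ≤ r} =
      Set.univ.pi fun _ => Set.univ.pi fun _ => Set.Icc (-r) r := by
    simp only [abs_le]
    exact Set.ext fun P => ⟨fun h i _ j _ => h i j, fun h i j => h i trivial j trivial⟩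
  rw [hcube]
  exact isCompact_univ_pi fun _ => isCompact_univ_pi fun _ => isCompact_Icc

lemma eventually_fst_pos {β : Type*} {l : Filter β} :
    ∀ᶠ p : ℝ × β in 𝓝[>] 0 ×ˢ l, 0 < p.1 :=
  tendsto_fst.eventually self_mem_nhdsWithin

lemma coe_mul_sub_coe_eq_add {c : ℝ} (hc : 0 < c) (A : EReal) (r s : ℝ) :
    (c : EReal) * (A - (r : EReal)) =
      (c : EReal) * (A - (s : EReal)) + ((c * (s - r) : ℝ) : EReal) := by
  induction A using EReal.rec with
  | bot => simp [EReal.coe_mul_bot_of_pos hc]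
  | top =>
    rw [EReal.top_sub_coe, EReal.top_sub_coe, EReal.coe_mul_top_of_pos hc, EReal.top_add_coe]
  | coe a =>
    norm_cast
    ring

section SpectralFunction

variable {n : ℕ} {X Y H : Sym n} {U : Matrix (Fin n) (Fin n) ℝ} {v : Fin n → ℝ}

lemma ipM_eq_dotProduct_diag (hY : Y.val = U * diagonal v * Uᵀ) (H : Sym n) :
    ipM Y H = v ⬝ᵥ (Uᵀ * H.val * U).diag := by
  rw [ipM, hY, Matrix.mul_assoc, Matrix.mul_assoc, Matrix.trace_mul_comm, Matrix.mul_assoc,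
    trace_diagonal_mul_eq_dotProduct]
  rfl

/-- The difference quotient `(λ(X + tH) - λ(X)) / t` of the ordered eigenvalues, as a function of
the pair `(t, H)`; it is `0` at `t = 0`. -/
def eigvalQuot (X : Sym n) (p : ℝ × Sym n) : Fin n → ℝ :=
  p.1⁻¹ • (eigval (X + p.1 • p.2).val - eigval X.val)

lemma eigval_add_smul_eigvalQuot {p : ℝ × Sym n} (hp : p.1 ≠ 0) :
    eigval X.val + p.1 • eigvalQuot X p = eigval (X + p.1 • p.2).val := by
  rw [eigvalQuot, smul_inv_smul₀ hp, add_sub_cancel]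

lemma isHermitian_val (A : Sym n) : A.val.IsHermitian :=
  (conjTranspose_eq_transpose_of_trivial _).trans A.2

lemma eigvalQuot_dotProduct_self_le {p : ℝ × Sym n} (hp : p.1 ≠ 0) :
    eigvalQuot X p ⬝ᵥ eigvalQuot X p ≤ (p.2.val * p.2.val).trace := by
  have hHW := dotProduct_eigval_sub_self_le_trace (isHermitian_val (X + p.1 • p.2))
    (isHermitian_val X)
  have hdiff : (X + p.1 • p.2).val - X.val = p.1 • p.2.val := add_sub_cancel_left _ _
  rw [hdiff, ← eigval_add_smul_eigvalQuot hp, add_sub_cancel_left, smul_mul_smul_comm,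
    trace_smul, smul_dotProduct, dotProduct_smul, smul_smul, smul_eq_mul, smul_eq_mul] at hHW
  exact le_of_mul_le_mul_left hHW (mul_self_pos.mpr hp)

lemma abs_eigvalQuot_le {p : ℝ × Sym n} (hp : p.1 ≠ 0) (i : Fin n) :
    |eigvalQuot X p i| ≤ √(p.2.val * p.2.val).trace := by
  refine Real.abs_le_sqrt (le_trans ?_ (eigvalQuot_dotProduct_self_le (X := X) hp))
  rw [sq]
  exact Finset.single_le_sum (f := fun j => eigvalQuot X p j * eigvalQuot X p j)
    (fun j _ => mul_self_nonneg _) (Finset.mem_univ i)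

lemma exists_eventually_eigvalQuot_mem_isCompact (X H : Sym n) :
    ∃ K : Set (Fin n → ℝ), IsCompact K ∧ ∀ᶠ p in 𝓝[>] 0 ×ˢ 𝓝 H, eigvalQuot X p ∈ K := by
  have hcont : Continuous fun A : Sym n => √(A.val * A.val).trace := by fun_prop
  have hbound : ∀ᶠ p : ℝ × Sym n in 𝓝[>] 0 ×ˢ 𝓝 H,
      √(p.2.val * p.2.val).trace < √(H.val * H.val).trace + 1 :=
    ((hcont.tendsto H).comp tendsto_snd).eventually_lt_const (lt_add_one _)
  refine ⟨_, isCompact_closedBall 0 (√(H.val * H.val).trace + 1), ?_⟩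
  filter_upwards [hbound, eventually_fst_pos] with p hp ht
  rw [mem_closedBall_zero_iff, pi_norm_le_iff_of_nonneg (by positivity)]
  exact fun i => (abs_eigvalQuot_le ht.ne' i).trans hp.le

lemma diagonal_eigval_add_smul (hU : U ∈ eigOrth X.val) (t : ℝ) (H : Sym n) :
    diagonal (eigval X.val) + t • (Uᵀ * H.val * U) = Uᵀ * (X + t • H).val * U := by
  have hUU : Uᵀ * U = 1 := mul_eq_one_comm.mp hU.1
  have hX : Uᵀ * X.val * U = diagonal (eigval X.val) := by
    conv_lhs => rw [hU.2]
    calc Uᵀ * (U * diagonal (eigval X.val) * Uᵀ) * U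
        = (Uᵀ * U) * diagonal (eigval X.val) * (Uᵀ * U) := by simp only [Matrix.mul_assoc]
      _ = diagonal (eigval X.val) := by rw [hUU, Matrix.one_mul, Matrix.mul_one]
  rw [← hX, Submodule.coe_add, Submodule.coe_smul, Matrix.mul_add, Matrix.add_mul,
    Matrix.mul_smul, Matrix.smul_mul]

lemma exists_spectralExpansion (hU : U ∈ eigOrth X.val) {F : Ultrafilter (ℝ × Sym n)}
    (hF : ↑F ≤ 𝓝[>] (0 : ℝ) ×ˢ 𝓝 H) :
    ∃ P P₀ w₀, SpectralExpansion F (eigval X.val) Prod.fst (fun p => Uᵀ * p.2.val * U) P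
      (eigvalQuot X) (Uᵀ * H.val * U) P₀ w₀ := by
  choose Q hQ using fun p : ℝ × Sym n => exists_mem_eigOrth (isHermitian_val (X + p.1 • p.2))
  have horth (p : ℝ × Sym n) : (Uᵀ * Q p) * (Uᵀ * Q p)ᵀ = 1 :=
    transpose_mul_mul_transpose_mul hU.1 (hQ p).1
  have hne : ∀ᶠ p : ℝ × Sym n in F, p.1 ≠ 0 :=
    (eventually_fst_pos.filter_mono hF).mono fun p hp => hp.ne'
  obtain ⟨K, hK, hmem⟩ := exists_eventually_eigvalQuot_mem_isCompact X H
  obtain ⟨w₀, hw₀⟩ := exists_tendsto_of_eventually_mem_isCompact hK F (hmem.filter_mono hF)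
  obtain ⟨P₀, hP₀⟩ := exists_tendsto_of_eventually_mem_isCompact (isCompact_setOf_abs_apply_le 1) F
    (f := fun p => Uᵀ * Q p)
    (Eventually.of_forall fun p => abs_apply_le_one_of_mul_transpose_eq_one (horth p))
  have hcont : Continuous fun A : Sym n => Uᵀ * A.val * U := by fun_prop
  refine ⟨fun p => Uᵀ * Q p, P₀, w₀,
    { tendsto_time := tendsto_fst.mono_left hF
      tendsto_direction := ((hcont.tendsto H).comp tendsto_snd).mono_left hF
      tendsto_basis := hP₀
      tendsto_slope := hw₀
      orthogonal := Eventually.of_forall horth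
      decomposition := ?_
      antitone := ?_ }⟩
  · filter_upwards [hne] with p hp
    rw [eigval_add_smul_eigvalQuot hp, diagonal_eigval_add_smul hU]
    conv_lhs => rw [(hQ p).2]
    simp only [transpose_mul, transpose_transpose, Matrix.mul_assoc]
  · filter_upwards [hne] with p hp
    rw [eigval_add_smul_eigvalQuot hp]
    exact eigval_antitone _

lemma tendsto_eigvalQuot (hU : U ∈ eigOrth X.val) :
    Tendsto (eigvalQuot X) (𝓝[>] 0 ×ˢ 𝓝 H) (𝓝 (lambdaDir X.val U H.val)) := by
  refine (tendsto_iff_ultrafilter _ _ _).mpr fun F hF => ?_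
  obtain ⟨P, P₀, w₀, hexp⟩ := exists_spectralExpansion hU hF
  rw [lambdaDir_eq_of_blockwise_eigenvectors hexp.orthogonal_limit hexp.commute_limit
    (fun i j => hexp.mul_apply_limit) hexp.blockAntitone_limit]
  exact hexp.tendsto_slope

lemma subderiv2_le_liminf_sdq2_eigvalQuot (θ : (Fin n → ℝ) → EReal) (hU : U ∈ eigOrth X.val) :
    subderiv2 ipV θ (eigval X.val) v (lambdaDir X.val U H.val) ≤
      liminf (fun p => sdq2 ipV θ (eigval X.val) v p.1 (eigvalQuot X p)) (𝓝[>] 0 ×ˢ 𝓝 H) :=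
  liminf_le_liminf_of_le (g := map (fun p => (p.1, eigvalQuot X p)) (𝓝[>] 0 ×ˢ 𝓝 H))
    (u := fun q => sdq2 ipV θ (eigval X.val) v q.1 q.2)
    (tendsto_fst.prodMk (tendsto_eigvalQuot hU))

lemma curvTerm_le_liminf (hU : U ∈ eigOrth X.val) (hY : Y.val = U * diagonal v * Uᵀ)
    (hv : BlockAntitone (eigval X.val) v) :
    ((curvTerm X.val U H.val v : ℝ) : EReal) ≤
      liminf (fun p => ((2 / p.1 * (ipV v (eigvalQuot X p) - ipM Y p.2) : ℝ) : EReal))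
        (𝓝[>] 0 ×ˢ 𝓝 H) := by
  refine EReal.ge_of_forall_gt_iff_ge.mp fun c hc => le_liminf_of_le (by isBoundedDefault) ?_
  rw [EReal.coe_lt_coe_iff, curvTerm_eq_dotProduct_secondOrderCorrection hU H.2] at hc
  refine Filter.mem_iff_ultrafilter.mpr fun F hF => ?_
  obtain ⟨P, P₀, w₀, hexp⟩ := exists_spectralExpansion hU hF
  filter_upwards [hexp.eventually_lt_dotProduct_sub_diag (eigval_antitone _) hv hc] with p hp
  rw [EReal.coe_le_coe_iff, ipM_eq_dotProduct_diag hY]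
  exact hp.le

lemma sdq2_specFn_eq_add (θ : (Fin n → ℝ) → EReal) (X Y : Sym n) (v : Fin n → ℝ)
    {p : ℝ × Sym n} (hp : 0 < p.1) :
    sdq2 ipM (specFn θ) X Y p.1 p.2 = sdq2 ipV θ (eigval X.val) v p.1 (eigvalQuot X p) +
      ((2 / p.1 * (ipV v (eigvalQuot X p) - ipM Y p.2) : ℝ) : EReal) := by
  rw [sdq2, sdq2, eigval_add_smul_eigvalQuot hp.ne',
    coe_mul_sub_coe_eq_add (by positivity) _ _ (p.1 * ipV v (eigvalQuot X p))]
  congr 2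
  field_simp

lemma subderiv2_add_curvTerm_le (θ : (Fin n → ℝ) → EReal) (hU : U ∈ eigOrth X.val)
    (hY : Y.val = U * diagonal v * Uᵀ) (hv : BlockAntitone (eigval X.val) v) (H : Sym n) :
    subderiv2 ipV θ (eigval X.val) v (lambdaDir X.val U H.val) +
        ((curvTerm X.val U H.val v : ℝ) : EReal) ≤ subderiv2 ipM (specFn θ) X Y H := by
  refine (add_le_add (subderiv2_le_liminf_sdq2_eigvalQuot θ hU)
    (curvTerm_le_liminf hU hY hv)).trans (EReal.le_liminf_add.trans_eq (liminf_congr ?_))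
  filter_upwards [eventually_fst_pos] with p hp
  exact (sdq2_specFn_eq_add θ X Y v hp).symm

lemma lambdaDir_eq_of_mem_eigOrth {V : Matrix (Fin n) (Fin n) ℝ} (hU : U ∈ eigOrth X.val)
    (hV : V ∈ eigOrth X.val) (H : Sym n) : lambdaDir X.val U H.val = lambdaDir X.val V H.val :=
  tendsto_nhds_unique (tendsto_eigvalQuot hU) (tendsto_eigvalQuot hV)

end SpectralFunction

theorem second_subderiv_lower_estimate_general {n : ℕ} (θ : (Fin n → ℝ) → EReal)
    (X Y : Sym n) (U : Matrix (Fin n) (Fin n) ℝ) (y v : Fin n → ℝ) (σ : Equiv.Perm (Fin n))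
    (hU : U ∈ eigOrth X.val) (hYdec : Y.val = U * Matrix.diagonal y * Uᵀ)
    (hσblock : ∀ i, eigval X.val (σ i) = eigval X.val i) (hv : ∀ i, v i = y (σ i))
    (hvdec : ∀ i j : Fin n, i ≤ j → eigval X.val i = eigval X.val j → v j ≤ v i) (H : Sym n) :
    subderiv2 ipV θ (eigval X.val) v (lambdaDir X.val U H.val)
        + ((curvTerm X.val U H.val y : ℝ) : EReal)
      ≤ subderiv2 ipM (specFn θ) X Y H := by
  obtain rfl : v = y ∘ σ := funext hv
  have hσ : eigval X.val ∘ σ = eigval X.val := funext hσblock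
  have hUσ : U.submatrix id σ ∈ eigOrth X.val := submatrix_id_mem_eigOrth hU hσ
  rw [lambdaDir_eq_of_mem_eigOrth hU hUσ, ← curvTerm_submatrix_id_comp hσ]
  refine subderiv2_add_curvTerm_le θ hUσ ?_ hvdec H
  rw [hYdec, submatrix_id_conj_diagonal_comp]

/-- Proposition 3.1: lower estimate for the second subderivative of a
spectral function. -/
theorem second_subderiv_lower_estimate {n : ℕ} (θ : (Fin n → ℝ) → EReal)
    (X Y : Sym n) (U : Matrix (Fin n) (Fin n) ℝ) (y v : Fin n → ℝ) (σ : Equiv.Perm (Fin n))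
    (hsym : SymmetricFn θ) (hlsc : LowerSemicontinuous (specFn θ))
    (hY : LimSubgrad ipM (specFn θ) X Y)
    (hU : U ∈ eigOrth X.val)
    (hy : LimSubgrad ipV θ (eigval X.val) y)
    (hYdec : Y.val = U * Matrix.diagonal y * Uᵀ)
    (hσblock : ∀ i, eigval X.val (σ i) = eigval X.val i)
    (hv : ∀ i, v i = y (σ i))
    (hvdec : ∀ i j : Fin n, i ≤ j → eigval X.val i = eigval X.val j → v j ≤ v i) :
    ∀ H : Sym n,
      subderiv2 ipV θ (eigval X.val) v (lambdaDir X.val U H.val)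
          + ((curvTerm X.val U H.val y : ℝ) : EReal)
        ≤ subderiv2 ipM (specFn θ) X Y H := by
  intro H
  exact second_subderiv_lower_estimate_general θ X Y U y v σ hU hYdec hσblock hv hvdec H

end SpecPaper
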